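/- lim_{N→∞} Σ_{n=−N+1}^{N−1} Σ_{m∈ℤ} (−1)^{m+n} / ((5m)² + (5n+1)²) = −(π/(5√5)) · log( √5 + 1 − √(5 + 2√5) ) + (π/25) · log( 11 + 5√5 ). -/

import Mathlib

open Filter

/-!
Write `θ(s, t) = ∑ exp (-π (n + s)² t)` for `HurwitzZeta.evenKernel`. The inner sum is the partial
fraction expansion of `1 / sin`, giving a multiple of `(-1)ⁿ / (k sinh (π k / 5))` at `k = 5n + 1`.
By the Jacobi triple product these numbers, over all `k`, are the Fourier coefficients in `s` of the
logarithm of the theta function `θ(s, 5)` (up to a constant). Finite Fourier inversion over the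
residue classes mod `5` therefore expresses the double sum through `log θ(r/5, 5)`, `r = 0, 1, 2`.

It remains to find the ratios of `A = θ(0, 5)`, `B = θ(1/5, 5)`, `C = θ(2/5, 5)`. Poisson summation
gives `2 (B + C) = (√5 - 1) A`, and splitting the Gaussian integers modulo `2 + i` gives
`4 B C = θ(0, 1)² - A²`. Finally `m = θ(0, 1)² / A²` is found from the product formula
`∏ⱼ θ(j/5, 5t) = η(5t)⁵ θ(0, t) / η(t)` at `t = 1` and `t = 1/5`, with the lemniscatic relation
`2√2 η(1)³ = θ(0, 1)³`, which lead to `(5 - m)⁵ (m - 1) = 64 m⁵` and so to `m = 5√5 - 10`.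
-/

section QPochhammer

open Topology

variable {𝕜 : Type*} [NormedField 𝕜] {q : 𝕜}

/-- The finite `q`-Pochhammer symbol `(a; q)_n = ∏_{i < n} (1 - a qⁱ)`. -/
def qPochhammer (a q : 𝕜) (n : ℕ) : 𝕜 := ∏ i ∈ Finset.range n, (1 - a * q ^ i)

/-- The infinite `q`-Pochhammer symbol `(a; q)_∞ = ∏_{i ≥ 0} (1 - a qⁱ)`, a convergent product
when `‖q‖ < 1`. -/
noncomputable def qPochhammerInf (a q : 𝕜) : 𝕜 := ∏' i : ℕ, (1 - a * q ^ i)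

/-- The reciprocal `1 / (q; q)_k` of a `q`-factorial with integral index. It vanishes for `k < 0`,
so that `q`-binomial sums may run over all of `ℤ`. -/
noncomputable def qFactorialInv (q : 𝕜) : ℤ → 𝕜
  | (n : ℕ) => (qPochhammer q q n)⁻¹
  | .negSucc _ => 0

lemma qFactorialInv_natCast (q : 𝕜) (n : ℕ) : qFactorialInv q n = (qPochhammer q q n)⁻¹ := rfl

lemma qFactorialInv_of_neg (q : 𝕜) : ∀ {k : ℤ}, k < 0 → qFactorialInv q k = 0
  | .negSucc _, _ => rfl

lemma summable_norm_neg_mul_pow (hq : ‖q‖ < 1) (a : 𝕜) : Summable fun i : ℕ ↦ ‖-(a * q ^ i)‖ := by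
  simpa only [norm_neg, norm_mul, norm_pow] using
    (summable_geometric_of_lt_one (norm_nonneg q) hq).mul_left ‖a‖

lemma norm_pow_lt_one (hq : ‖q‖ < 1) {n : ℕ} (hn : n ≠ 0) : ‖q ^ n‖ < 1 :=
  (norm_pow q n).trans_lt (pow_lt_one₀ (norm_nonneg q) hq hn)

lemma one_sub_pow_ne_zero (hq : ‖q‖ < 1) {n : ℕ} (hn : n ≠ 0) : 1 - q ^ n ≠ 0 := fun h ↦
  (norm_pow_lt_one hq hn).ne (by rw [← sub_eq_zero.1 h, norm_one])

lemma qPochhammer_succ (a q : 𝕜) (n : ℕ) :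
    qPochhammer a q (n + 1) = qPochhammer a q n * (1 - a * q ^ n) :=
  Finset.prod_range_succ _ _

lemma qPochhammer_self_ne_zero (hq : ‖q‖ < 1) (n : ℕ) : qPochhammer q q n ≠ 0 :=
  Finset.prod_ne_zero_iff.2 fun i _ ↦ by
    rw [← pow_succ']
    exact one_sub_pow_ne_zero hq i.succ_ne_zero

lemma qPochhammer_mul (a q : 𝕜) (N n : ℕ) :
    qPochhammer a q (N * n) = ∏ r ∈ Finset.range N, qPochhammer (a * q ^ r) (q ^ N) n := by
  simp only [qPochhammer]
  rw [Finset.prod_comm]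
  induction n with
  | zero => simp
  | succ n ih =>
    rw [Nat.mul_succ, Finset.prod_range_add, ih, Finset.prod_range_succ]
    congr 1
    exact Finset.prod_congr rfl fun r _ ↦ by ring

section CompleteSpace

variable [CompleteSpace 𝕜]

lemma multipliable_one_sub_mul_pow (hq : ‖q‖ < 1) (a : 𝕜) :
    Multipliable fun i : ℕ ↦ 1 - a * q ^ i := by
  simpa only [sub_eq_add_neg] using
    multipliable_one_add_of_summable (summable_norm_neg_mul_pow hq a)

lemma tendsto_qPochhammer (hq : ‖q‖ < 1) (a : 𝕜) :
    Tendsto (qPochhammer a q) atTop (𝓝 (qPochhammerInf a q)) :=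
  (multipliable_one_sub_mul_pow hq a).hasProd.tendsto_prod_nat

lemma qPochhammerInf_self_ne_zero (hq : ‖q‖ < 1) : qPochhammerInf q q ≠ 0 := by
  simpa only [qPochhammerInf, sub_eq_add_neg] using
    tprod_one_add_ne_zero_of_summable (f := fun i : ℕ ↦ -(q * q ^ i))
      (fun i ↦ by
        rw [← sub_eq_add_neg, ← pow_succ']
        exact one_sub_pow_ne_zero hq i.succ_ne_zero)
      (summable_norm_neg_mul_pow hq q)

lemma qPochhammerInf_eq_one_sub_mul (hq : ‖q‖ < 1) (a : 𝕜) :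
    qPochhammerInf a q = (1 - a) * qPochhammerInf (a * q) q := by
  have shift (i : ℕ) : 1 - a * q * q ^ i = 1 - a * q ^ (i + 1) := by ring
  simp only [qPochhammerInf, shift]
  rw [tprod_eq_zero_mul' (f := fun i ↦ 1 - a * q ^ i), pow_zero, mul_one]
  simpa only [shift] using multipliable_one_sub_mul_pow hq (a * q)

lemma qPochhammerInf_mul_neg (hq : ‖q‖ < 1) (a : 𝕜) :
    qPochhammerInf a q * qPochhammerInf (-a) q = qPochhammerInf (a ^ 2) (q ^ 2) := by
  rw [qPochhammerInf, qPochhammerInf, ← (multipliable_one_sub_mul_pow hq a).tprod_mul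
    (multipliable_one_sub_mul_pow hq (-a)), qPochhammerInf]
  exact tprod_congr fun i ↦ by ring

lemma qPochhammerInf_eq_prod_range (hq : ‖q‖ < 1) (a : 𝕜) {N : ℕ} (hN : N ≠ 0) :
    qPochhammerInf a q = ∏ r ∈ Finset.range N, qPochhammerInf (a * q ^ r) (q ^ N) := by
  have hlim : Tendsto (fun n ↦ qPochhammer a q (N * n)) atTop (𝓝 (qPochhammerInf a q)) :=
    (tendsto_qPochhammer hq a).comp (tendsto_id.const_mul_atTop' (Nat.pos_of_ne_zero hN))
  refine tendsto_nhds_unique hlim ?_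
  simp only [qPochhammer_mul]
  exact tendsto_finsetProd _ fun r _ ↦ tendsto_qPochhammer (norm_pow_lt_one hq hN) _

lemma qPochhammerInf_neg_mul_qPochhammerInf_sq (hq : ‖q‖ < 1) :
    qPochhammerInf (-q) q * qPochhammerInf q (q ^ 2) = 1 := by
  have even_odd := qPochhammerInf_eq_prod_range hq q two_ne_zero
  rw [Finset.prod_range_succ, Finset.prod_range_one, pow_zero, mul_one, pow_one, ← sq] at even_odd
  have factor := qPochhammerInf_mul_neg hq q
  rw [even_odd] at factor
  apply mul_right_cancel₀ (qPochhammerInf_self_ne_zero (norm_pow_lt_one hq two_ne_zero))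
  linear_combination factor

end CompleteSpace

end QPochhammer

section JacobiTripleProduct

open Topology

variable {𝕜 : Type*} [NormedField 𝕜] {q z : 𝕜}

lemma qFactorialInv_sub_one (hq : ‖q‖ < 1) (k : ℤ) :
    qFactorialInv q (k - 1) = (1 - q ^ k) * qFactorialInv q k := by
  rcases k with (_ | n) | n
  · rw [Int.ofNat_eq_natCast, Nat.cast_zero, qFactorialInv_of_neg q (by lia), zpow_zero, sub_self,
      zero_mul]
  · have := one_sub_pow_ne_zero hq n.succ_ne_zero
    have := qPochhammer_self_ne_zero hq n
    rw [Int.ofNat_eq_natCast, qFactorialInv_natCast, Nat.cast_succ, add_sub_cancel_right,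
      qFactorialInv_natCast, ← Nat.cast_succ, zpow_natCast, qPochhammer_succ, ← pow_succ']
    field_simp
  · rw [qFactorialInv_of_neg q (by lia), qFactorialInv_of_neg q (by lia), mul_zero]

/-- The coefficient of `zⁿ` in `∏_{j < N} (1 + z q^{2j+1}) (1 + z⁻¹ q^{2j+1})`, namely the
`q²`-binomial coefficient `[2N choose N + n]` times `q^{n²}`. -/
noncomputable def tripleProductCoeff (q : 𝕜) (N : ℕ) (n : ℤ) : 𝕜 :=
  qPochhammer (q ^ 2) (q ^ 2) (2 * N) * qFactorialInv (q ^ 2) (N + n) *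
    qFactorialInv (q ^ 2) (N - n) * q ^ (n ^ 2)

lemma tripleProductCoeff_zero_zero (q : 𝕜) : tripleProductCoeff q 0 0 = 1 := by
  simp [tripleProductCoeff, qPochhammer, qFactorialInv]

lemma tripleProductCoeff_zero_of_ne_zero (q : 𝕜) {n : ℤ} (hn : n ≠ 0) :
    tripleProductCoeff q 0 n = 0 := by
  rcases hn.lt_or_gt with hn | hn
  · simp [tripleProductCoeff, qFactorialInv_of_neg _ hn]
  · simp [tripleProductCoeff, qFactorialInv_of_neg _ (neg_neg_of_pos hn)]

lemma tripleProductCoeff_succ (hq : ‖q‖ < 1) (hq0 : q ≠ 0) (N : ℕ) (n : ℤ) :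
    tripleProductCoeff q (N + 1) n = (1 + (q ^ (2 * N + 1)) ^ 2) * tripleProductCoeff q N n +
      q ^ (2 * N + 1) * (tripleProductCoeff q N (n - 1) + tripleProductCoeff q N (n + 1)) := by
  have reindex (m : ℤ) : qFactorialInv (q ^ 2) m =
      (1 - (q ^ (m + 1)) ^ 2) * qFactorialInv (q ^ 2) (m + 1) := by
    have := qFactorialInv_sub_one (norm_pow_lt_one hq two_ne_zero) (m + 1)
    rwa [add_sub_cancel_right, ← zpow_natCast, ← zpow_mul, mul_comm ((2 : ℕ) : ℤ), zpow_mul,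
      zpow_natCast, zpow_natCast] at this
  have upper := reindex (N + n)
  have upper' := reindex (N + n - 1)
  have lower := reindex (N - n)
  have lower' := reindex (N - n - 1)
  have sq_sub : q ^ ((n - 1) ^ 2) = q ^ (n ^ 2) * ((q ^ n) ^ 2)⁻¹ * q := by
    rw [show (n - 1) ^ 2 = n ^ 2 + -(n * 2) + 1 by ring, zpow_add₀ hq0, zpow_add₀ hq0, zpow_neg,
      zpow_mul, zpow_one, zpow_ofNat]
  have sq_add : q ^ ((n + 1) ^ 2) = q ^ (n ^ 2) * (q ^ n) ^ 2 * q := by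
    rw [show (n + 1) ^ 2 = n ^ 2 + n * 2 + 1 by ring, zpow_add₀ hq0, zpow_add₀ hq0, zpow_mul,
      zpow_one, zpow_ofNat]
  have hqn : q ^ n ≠ 0 := zpow_ne_zero n hq0
  rw [tripleProductCoeff, tripleProductCoeff, tripleProductCoeff, tripleProductCoeff, sq_sub,
    sq_add, mul_add_one, qPochhammer_succ, qPochhammer_succ]
  rw [show ((N + 1 : ℕ) : ℤ) + n = N + n + 1 by push_cast; ring,
    show ((N + 1 : ℕ) : ℤ) - n = N - n + 1 by push_cast; ring,
    show (N : ℤ) + (n - 1) = N + n - 1 by ring, show (N : ℤ) - (n - 1) = N - n + 1 by ring,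
    ← add_assoc, show (N : ℤ) - (n + 1) = N - n - 1 by ring,
    upper', lower', sub_add_cancel, sub_add_cancel, upper, lower]
  simp only [zpow_add₀ hq0, zpow_sub₀ hq0, zpow_natCast, zpow_one]
  field_simp
  ring

lemma hasSum_tripleProductCoeff (hq : ‖q‖ < 1) (hq0 : q ≠ 0) (hz : z ≠ 0) (N : ℕ) :
    HasSum (fun n : ℤ ↦ tripleProductCoeff q N n * z ^ n)
      (qPochhammer (-(z * q)) (q ^ 2) N * qPochhammer (-(z⁻¹ * q)) (q ^ 2) N) := by
  induction N with
  | zero =>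
    simpa [qPochhammer, tripleProductCoeff_zero_zero] using
      hasSum_single (f := fun n : ℤ ↦ tripleProductCoeff q 0 n * z ^ n) 0
        fun n hn ↦ by rw [tripleProductCoeff_zero_of_ne_zero q hn, zero_mul]
  | succ N ih =>
    have up := ((Equiv.subRight (1 : ℤ)).hasSum_iff.2 ih).mul_left (z * q ^ (2 * N + 1))
    have down := ((Equiv.addRight (1 : ℤ)).hasSum_iff.2 ih).mul_left (z⁻¹ * q ^ (2 * N + 1))
    convert! ((ih.mul_left (1 + (q ^ (2 * N + 1)) ^ 2)).add up).add down using 1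
    · funext n
      rw [tripleProductCoeff_succ hq hq0]
      simp only [Function.comp_apply, Equiv.subRight_apply, Equiv.coe_addRight, zpow_add₀ hz,
        zpow_sub₀ hz, zpow_one]
      field_simp
      ring
    · rw [qPochhammer_succ, qPochhammer_succ]
      field_simp
      ring

lemma summable_norm_pow_sq_mul_pow (hq : ‖q‖ < 1) (z : 𝕜) :
    Summable fun n : ℕ ↦ ‖q ^ (n ^ 2) * z ^ n‖ := by
  have factor_tendsto : Tendsto (fun n : ℕ ↦ ‖q‖ ^ n * ‖z‖) atTop (𝓝 0) := by
    simpa only [zero_mul] using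
      (tendsto_pow_atTop_nhds_zero_of_lt_one (norm_nonneg q) hq).mul_const ‖z‖
  have geometric : Summable fun n : ℕ ↦ (1 / 2 : ℝ) ^ n :=
    summable_geometric_of_lt_one one_half_pos.le one_half_lt_one
  refine geometric.of_norm_bounded_eventually_nat ?_
  filter_upwards [factor_tendsto.eventually_le_const one_half_pos] with n hn
  rw [norm_norm, norm_mul, norm_pow, norm_pow, sq, pow_mul, ← mul_pow]
  gcongr

lemma summable_norm_zpow_sq_mul_zpow (hq : ‖q‖ < 1) (z : 𝕜) :
    Summable fun n : ℤ ↦ ‖q ^ (n ^ 2) * z ^ n‖ := by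
  refine .of_nat_of_neg ((summable_norm_pow_sq_mul_pow hq z).congr fun n ↦ ?_)
    ((summable_norm_pow_sq_mul_pow hq z⁻¹).congr fun n ↦ ?_)
  · rw [← Nat.cast_pow, zpow_natCast, zpow_natCast]
  · rw [neg_sq, ← Nat.cast_pow, zpow_natCast, zpow_neg, zpow_natCast, inv_pow]

section CompleteSpace

variable [CompleteSpace 𝕜]

lemma tendsto_qFactorialInv (hq : ‖q‖ < 1) :
    Tendsto (qFactorialInv q) atTop (𝓝 (qPochhammerInf q q)⁻¹) := by
  rw [← Nat.map_cast_int_atTop]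
  exact (tendsto_qPochhammer hq q).inv₀ (qPochhammerInf_self_ne_zero hq)

lemma exists_forall_norm_qFactorialInv_le (hq : ‖q‖ < 1) :
    ∃ C, ∀ k, ‖qFactorialInv q k‖ ≤ C := by
  obtain ⟨C, hC⟩ := (Metric.isBounded_range_of_tendsto _
    ((tendsto_qFactorialInv hq).comp tendsto_natCast_atTop_atTop)).exists_norm_le
  have nat_le (n : ℕ) : ‖qFactorialInv q n‖ ≤ C := hC _ (Set.mem_range_self n)
  refine ⟨C, fun k ↦ ?_⟩
  rcases k with n | n
  · exact nat_le n
  · rw [qFactorialInv_of_neg q (by lia), norm_zero]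
    exact (norm_nonneg _).trans (nat_le 0)

lemma exists_forall_norm_tripleProductCoeff_le (hq : ‖q‖ < 1) :
    ∃ C, ∀ N n, ‖tripleProductCoeff q N n‖ ≤ C * ‖q ^ (n ^ 2)‖ := by
  have hq2 := norm_pow_lt_one hq two_ne_zero
  obtain ⟨C, hC⟩ := (Metric.isBounded_range_of_tendsto _
    (tendsto_qPochhammer hq2 (q ^ 2))).exists_norm_le
  obtain ⟨D, hD⟩ := exists_forall_norm_qFactorialInv_le hq2
  have hC0 : 0 ≤ C := (norm_nonneg _).trans (hC _ (Set.mem_range_self 0))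
  have hD0 : 0 ≤ D := (norm_nonneg _).trans (hD 0)
  refine ⟨C * D * D, fun N n ↦ ?_⟩
  simp only [tripleProductCoeff, norm_mul]
  gcongr
  exacts [hC _ (Set.mem_range_self _), hD _, hD _]

lemma tendsto_tripleProductCoeff (hq : ‖q‖ < 1) (n : ℤ) :
    Tendsto (tripleProductCoeff q · n) atTop
      (𝓝 ((qPochhammerInf (q ^ 2) (q ^ 2))⁻¹ * q ^ (n ^ 2))) := by
  have hq2 := norm_pow_lt_one hq two_ne_zero
  have numerator := (tendsto_qPochhammer hq2 (q ^ 2)).comp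
    (tendsto_id.const_mul_atTop' two_pos)
  have upper := (tendsto_qFactorialInv hq2).comp
    (tendsto_atTop_add_const_right _ n tendsto_natCast_atTop_atTop)
  have lower := (tendsto_qFactorialInv hq2).comp
    (tendsto_atTop_add_const_right _ (-n) tendsto_natCast_atTop_atTop)
  convert! ((numerator.mul upper).mul lower).mul_const (q ^ (n ^ 2)) using 2
  rw [mul_inv_cancel₀ (qPochhammerInf_self_ne_zero hq2), one_mul]

theorem hasSum_zpow_sq_mul_zpow (hq : ‖q‖ < 1) (hq0 : q ≠ 0) (hz : z ≠ 0) :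
    HasSum (fun n : ℤ ↦ q ^ (n ^ 2) * z ^ n) (qPochhammerInf (q ^ 2) (q ^ 2) *
      (qPochhammerInf (-(z * q)) (q ^ 2) * qPochhammerInf (-(z⁻¹ * q)) (q ^ 2))) := by
  have hq2 := norm_pow_lt_one hq two_ne_zero
  have summable := summable_norm_zpow_sq_mul_zpow hq z
  obtain ⟨C, hC⟩ := exists_forall_norm_tripleProductCoeff_le hq
  have tsum_tendsto : Tendsto (fun N : ℕ ↦ ∑' n : ℤ, tripleProductCoeff q N n * z ^ n) atTop
      (𝓝 (∑' n : ℤ, (qPochhammerInf (q ^ 2) (q ^ 2))⁻¹ * q ^ (n ^ 2) * z ^ n)) := by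
    refine tendsto_tsum_of_dominated_convergence (summable.mul_left C)
      (fun n ↦ (tendsto_tripleProductCoeff hq n).mul_const _) (.of_forall fun N n ↦ ?_)
    rw [norm_mul, norm_mul, ← mul_assoc]
    gcongr
    exact hC N n
  have prod_tendsto := (tendsto_qPochhammer hq2 (-(z * q))).mul
    (tendsto_qPochhammer hq2 (-(z⁻¹ * q)))
  have tsum_eq_prod := tendsto_nhds_unique tsum_tendsto
    (prod_tendsto.congr fun N ↦ (hasSum_tripleProductCoeff hq hq0 hz N).tsum_eq.symm)
  simp only [mul_assoc] at tsum_eq_prod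
  rw [tsum_mul_left, inv_mul_eq_iff_eq_mul₀ (qPochhammerInf_self_ne_zero hq2)] at tsum_eq_prod
  exact tsum_eq_prod ▸ summable.of_norm.hasSum

end CompleteSpace

end JacobiTripleProduct

section ThetaProducts

open HurwitzZeta Real Topology

variable {t : ℝ}

lemma hasProd_ofReal {ι : Type*} {f : ι → ℝ} {a : ℝ} :
    HasProd (fun i ↦ (f i : ℂ)) a ↔ HasProd f a := by
  simp only [HasProd, ← Complex.ofReal_prod, tendsto_ofReal_iff]

lemma ofReal_qPochhammerInf {q : ℝ} (hq : ‖q‖ < 1) (a : ℝ) :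
    ((qPochhammerInf a q : ℝ) : ℂ) = qPochhammerInf (a : ℂ) q := by
  simpa [qPochhammerInf] using
    (hasProd_ofReal.2 (multipliable_one_sub_mul_pow hq a).hasProd).tprod_eq.symm

/-- The nome `exp (πiτ)` of the theta functions at the point `τ = it` of the imaginary axis. -/
noncomputable def nome (t : ℝ) : ℝ := exp (-(π * t))

lemma nome_pos (t : ℝ) : 0 < nome t := exp_pos _

lemma nome_zero : nome 0 = 1 := by
  rw [nome, mul_zero, neg_zero, exp_zero]

lemma nome_add (s t : ℝ) : nome (s + t) = nome s * nome t := by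
  rw [nome, mul_add, neg_add, exp_add, nome, nome]

lemma nome_pow (t : ℝ) (n : ℕ) : nome t ^ n = nome (n * t) := by
  rw [nome, ← exp_nat_mul, nome]
  ring_nf

lemma nome_zpow (t : ℝ) (n : ℤ) : nome t ^ n = nome (n * t) := by
  rw [nome, ← rpow_intCast, ← exp_mul, nome]
  ring_nf

lemma nome_sum {ι : Type*} (s : Finset ι) (f : ι → ℝ) :
    nome (∑ i ∈ s, f i) = ∏ i ∈ s, nome (f i) := by
  simp only [nome, Finset.mul_sum, ← Finset.sum_neg_distrib, exp_sum]

lemma nome_neg (t : ℝ) : nome (-t) = (nome t)⁻¹ := by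
  rw [nome, mul_neg, exp_neg, nome]

lemma nome_lt_one (ht : 0 < t) : nome t < 1 :=
  exp_lt_one_iff.2 (neg_neg_of_pos (mul_pos pi_pos ht))

lemma norm_nome_lt_one (ht : 0 < t) : ‖nome t‖ < 1 := by
  rw [norm_of_nonneg (nome_pos t).le]
  exact nome_lt_one ht

lemma hasSum_nome_evenKernel (s : ℝ) (ht : 0 < t) :
    HasSum (fun n : ℤ ↦ nome ((n + s) ^ 2 * t)) (evenKernel s t) := by
  simpa only [nome, neg_mul, mul_assoc] using hasSum_int_evenKernel s ht

lemma evenKernel_pos (a : UnitAddCircle) (ht : 0 < t) : 0 < evenKernel a t := by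
  obtain ⟨s, rfl⟩ := QuotientAddGroup.mk_surjective a
  have h := hasSum_nome_evenKernel s ht
  rw [← h.tsum_eq]
  exact h.summable.tsum_pos (fun n ↦ (nome_pos _).le) 0 (nome_pos _)

lemma evenKernel_one_div (a : UnitAddCircle) (t : ℝ) :
    evenKernel a (1 / t) = √t * cosKernel a t := by
  rw [evenKernel_functional_equation, one_div_one_div, ← sqrt_eq_rpow, one_div t, sqrt_inv,
    one_div, inv_inv]

lemma cosKernel_pos (a : UnitAddCircle) (ht : 0 < t) : 0 < cosKernel a t := by
  have h := evenKernel_pos a (one_div_pos.2 ht)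
  rw [evenKernel_one_div] at h
  exact pos_of_mul_pos_right h (sqrt_nonneg t)

lemma evenKernel_eq_qPochhammerInf (s : ℝ) (ht : 0 < t) :
    evenKernel s t = nome (s ^ 2 * t) * (qPochhammerInf (nome t ^ 2) (nome t ^ 2) *
      (qPochhammerInf (-nome ((1 + 2 * s) * t)) (nome t ^ 2) *
        qPochhammerInf (-nome ((1 - 2 * s) * t)) (nome t ^ 2))) := by
  have product := (hasSum_zpow_sq_mul_zpow (norm_nome_lt_one ht) (nome_pos t).ne'
    (nome_pos (2 * s * t)).ne').mul_left (nome (s ^ 2 * t))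
  rw [← nome_neg, ← nome_add, ← nome_add] at product
  rw [show (1 + 2 * s) * t = 2 * s * t + t by ring, show (1 - 2 * s) * t = -(2 * s * t) + t by ring]
  refine (hasSum_nome_evenKernel s ht).unique (product.congr_fun fun n ↦ ?_)
  rw [nome_zpow, nome_zpow, ← nome_add, ← nome_add]
  congr 1
  push_cast
  ring

lemma hasProd_cosKernel (s : ℝ) (ht : 0 < t) :
    HasProd
      (fun j : ℕ ↦ 1 + 2 * cos (2 * π * s) * nome t ^ (2 * j + 1) + (nome t ^ (2 * j + 1)) ^ 2)
      (cosKernel s t / qPochhammerInf (nome t ^ 2) (nome t ^ 2)) := by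
  set q := nome t
  set z := Complex.exp (2 * π * s * Complex.I)
  have hq : ‖(q : ℂ)‖ < 1 := by simpa using norm_nome_lt_one ht
  have hq2 := norm_pow_lt_one hq two_ne_zero
  have hz : z ≠ 0 := Complex.exp_ne_zero _
  have two_cos : 2 * Complex.cos (2 * π * s) = z + z⁻¹ := by
    rw [Complex.two_cos, neg_mul, Complex.exp_neg]
  have cosKernel_eq := (hasSum_int_cosKernel s ht).unique ((hasSum_zpow_sq_mul_zpow hq
    (Complex.ofReal_ne_zero.2 (nome_pos t).ne') hz).congr_fun fun n ↦ by
      rw [← Complex.ofReal_zpow, nome_zpow, ← Complex.exp_int_mul, nome, mul_comm]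
      push_cast
      ring_nf)
  rw [← hasProd_ofReal, Complex.ofReal_div, cosKernel_eq,
    ofReal_qPochhammerInf (norm_pow_lt_one (norm_nome_lt_one ht) two_ne_zero), Complex.ofReal_pow,
    mul_div_cancel_left₀ _ (qPochhammerInf_self_ne_zero hq2)]
  refine ((multipliable_one_sub_mul_pow hq2 _).hasProd.mul
    (multipliable_one_sub_mul_pow hq2 _).hasProd).congr_fun fun j ↦ ?_
  push_cast
  rw [two_cos]
  field_simp
  ring

lemma evenKernel_zero_eq_qPochhammerInf (ht : 0 < t) :
    evenKernel 0 t = qPochhammerInf (nome t ^ 2) (nome t ^ 2) *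
      qPochhammerInf (-nome t) (nome t ^ 2) ^ 2 := by
  have h := evenKernel_eq_qPochhammerInf 0 ht
  rw [AddCircle.coe_zero] at h
  simpa [nome_zero, sq] using h

lemma evenKernel_half_eq_qPochhammerInf (ht : 0 < t) :
    evenKernel (1 / 2 : ℝ) t = 2 * nome (t / 4) * qPochhammerInf (nome t ^ 2) (nome t ^ 2) *
      qPochhammerInf (-nome t ^ 2) (nome t ^ 2) ^ 2 := by
  have hq2 := norm_pow_lt_one (norm_nome_lt_one ht) two_ne_zero
  have at_neg_one := qPochhammerInf_eq_one_sub_mul hq2 (-1)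
  rw [evenKernel_eq_qPochhammerInf _ ht, show (1 / 2 : ℝ) ^ 2 * t = t / 4 by ring,
    show (1 + 2 * (1 / 2 : ℝ)) * t = (2 : ℕ) * t by norm_num,
    show (1 - 2 * (1 / 2 : ℝ)) * t = 0 by norm_num, ← nome_pow, nome_zero,
    at_neg_one, neg_one_mul]
  ring

lemma cosKernel_half_eq_qPochhammerInf (ht : 0 < t) :
    cosKernel (1 / 2 : ℝ) t = qPochhammerInf (nome t ^ 2) (nome t ^ 2) *
      qPochhammerInf (nome t) (nome t ^ 2) ^ 2 := by
  have hq2 := norm_pow_lt_one (norm_nome_lt_one ht) two_ne_zero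
  have factors := (multipliable_one_sub_mul_pow hq2 (nome t)).hasProd
  rw [sq (qPochhammerInf _ _), mul_comm, ← div_eq_iff (qPochhammerInf_self_ne_zero hq2)]
  refine (hasProd_cosKernel (1 / 2) ht).unique ((factors.mul factors).congr_fun fun j ↦ ?_)
  rw [mul_one_div, mul_div_cancel_left₀ _ two_ne_zero, cos_pi]
  ring

/-- The Dedekind eta function on the imaginary axis, `t ↦ η(it)`. -/
noncomputable def etaImaginaryAxis (t : ℝ) : ℝ :=
  nome (t / 12) * qPochhammerInf (nome t ^ 2) (nome t ^ 2)

lemma two_mul_etaImaginaryAxis_pow_three (ht : 0 < t) :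
    2 * etaImaginaryAxis t ^ 3 =
      evenKernel 0 t * evenKernel (1 / 2 : ℝ) t * cosKernel (1 / 2 : ℝ) t := by
  have euler := qPochhammerInf_neg_mul_qPochhammerInf_sq (norm_nome_lt_one ht)
  rw [qPochhammerInf_eq_prod_range (norm_nome_lt_one ht) (-nome t) two_ne_zero,
    Finset.prod_range_succ, Finset.prod_range_one, pow_zero, mul_one, pow_one, neg_mul, ← sq]
    at euler
  rw [etaImaginaryAxis, evenKernel_zero_eq_qPochhammerInf ht, evenKernel_half_eq_qPochhammerInf ht,
    cosKernel_half_eq_qPochhammerInf ht, mul_pow, nome_pow, show (3 : ℕ) * (t / 12) = t / 4 by ring]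
  generalize qPochhammerInf (nome t ^ 2) (nome t ^ 2) = E
  calc 2 * (nome (t / 4) * E ^ 3) = 2 * nome (t / 4) * E ^ 3 * 1 ^ 2 := by ring
    _ = _ := by
      rw [← euler]
      ring

lemma etaImaginaryAxis_pos (ht : 0 < t) : 0 < etaImaginaryAxis t := by
  have cube_pos : 0 < 2 * etaImaginaryAxis t ^ 3 := by
    rw [two_mul_etaImaginaryAxis_pow_three ht]
    exact mul_pos (mul_pos (evenKernel_pos _ ht) (evenKernel_pos _ ht)) (cosKernel_pos _ ht)
  exact (show Odd 3 by decide).pow_pos_iff.1 (pos_of_mul_pos_right cube_pos zero_le_two)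

lemma qPochhammerInf_nome_sq_pos (ht : 0 < t) : 0 < qPochhammerInf (nome t ^ 2) (nome t ^ 2) :=
  pos_of_mul_pos_right (etaImaginaryAxis_pos ht) (nome_pos _).le

lemma cosKernel_le_cosKernel {a b : ℝ} (hab : cos (2 * π * a) ≤ cos (2 * π * b)) (ht : 0 < t) :
    cosKernel a t ≤ cosKernel b t := by
  rw [← div_le_div_iff_of_pos_right (qPochhammerInf_nome_sq_pos ht)]
  refine le_of_tendsto_of_tendsto' (hasProd_cosKernel a ht) (hasProd_cosKernel b ht) fun s ↦
    Finset.prod_le_prod (fun j _ ↦ ?_) fun j _ ↦ ?_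
  · have := nome_pos t
    nlinarith [sq_nonneg (1 - nome t ^ (2 * j + 1)), pow_pos this (2 * j + 1),
      neg_one_le_cos (2 * π * a)]
  · have := nome_pos t
    gcongr

lemma evenKernel_le_evenKernel {a b : ℝ} (hab : cos (2 * π * a) ≤ cos (2 * π * b)) (ht : 0 < t) :
    evenKernel a t ≤ evenKernel b t := by
  rw [← one_div_one_div t, evenKernel_one_div, evenKernel_one_div]
  gcongr
  exact cosKernel_le_cosKernel hab (one_div_pos.2 ht)

lemma cosKernel_one_div (a : UnitAddCircle) (ht : 0 < t) :
    cosKernel a (1 / t) = √t * evenKernel a t := by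
  have h := evenKernel_one_div a (1 / t)
  rw [one_div_one_div, one_div, sqrt_inv] at h
  rw [one_div, h, mul_inv_cancel_left₀ (sqrt_pos.2 ht).ne']

lemma evenKernel_zero_one_div (t : ℝ) : evenKernel 0 (1 / t) = √t * evenKernel 0 t := by
  rw [evenKernel_one_div, evenKernel_eq_cosKernel_of_zero]

lemma etaImaginaryAxis_one_div (ht : 0 < t) :
    etaImaginaryAxis (1 / t) = √t * etaImaginaryAxis t := by
  refine (show Odd 3 by decide).strictMono_pow.injective (mul_left_cancel₀ two_ne_zero ?_)
  rw [two_mul_etaImaginaryAxis_pow_three (one_div_pos.2 ht), evenKernel_zero_one_div,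
    evenKernel_one_div, cosKernel_one_div _ ht]
  linear_combination -√t ^ 3 * two_mul_etaImaginaryAxis_pow_three ht

lemma sum_range_sub_sq (n : ℕ) (c : ℝ) :
    ∑ j ∈ Finset.range n, ((j : ℝ) - c) ^ 2 =
      n * ((n - 1) * (2 * n - 1) / 6 - c * (n - 1) + c ^ 2) := by
  induction n with
  | zero => simp
  | succ n ih =>
    rw [Finset.sum_range_succ, ih]
    push_cast
    ring

lemma evenKernel_div_eq_qPochhammerInf (r : ℝ) {N : ℝ} (hN : 0 < N) (ht : 0 < t) :
    evenKernel (r / N : ℝ) (N * t) = nome (r ^ 2 * (t / N)) *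
      (qPochhammerInf (nome (N * t) ^ 2) (nome (N * t) ^ 2) *
        (qPochhammerInf (-nome ((N + 2 * r) * t)) (nome (N * t) ^ 2) *
          qPochhammerInf (-nome ((N - 2 * r) * t)) (nome (N * t) ^ 2))) := by
  rw [evenKernel_eq_qPochhammerInf _ (mul_pos hN ht),
    show (r / N) ^ 2 * (N * t) = r ^ 2 * (t / N) by field_simp,
    show (1 + 2 * (r / N)) * (N * t) = (N + 2 * r) * t by field_simp,
    show (1 - 2 * (r / N)) * (N * t) = (N - 2 * r) * t by field_simp]

lemma neg_nome_odd_mul (t : ℝ) (j : ℕ) :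
    -nome ((2 * j + 1) * t) = -nome t * (nome t ^ 2) ^ j := by
  rw [← pow_mul, neg_mul, ← pow_succ', nome_pow]
  push_cast
  rfl

/-- For odd `N = 2k + 1` the numbers `N + 2 (j - k) = 2 j + 1` exhaust the odd numbers below `2 N`,
so the triple products at the `N`-torsion points interlace to the one at `0`. -/
lemma prod_evenKernel_mul_etaImaginaryAxis (k : ℕ) (ht : 0 < t) :
    (∏ j ∈ Finset.range (2 * k + 1),
        evenKernel (((j : ℝ) - k) / (2 * k + 1) : ℝ) ((2 * k + 1) * t)) * etaImaginaryAxis t =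
      etaImaginaryAxis ((2 * k + 1) * t) ^ (2 * k + 1) * evenKernel 0 t := by
  have hN : (2 * k + 1 : ℝ) ≠ 0 := by positivity
  set q := nome t with hq
  set E := qPochhammerInf ((q ^ 2) ^ (2 * k + 1)) ((q ^ 2) ^ (2 * k + 1))
  have nome_mul : nome ((2 * k + 1) * t) ^ 2 = (q ^ 2) ^ (2 * k + 1) := by
    rw [hq, pow_right_comm, nome_pow t (2 * k + 1)]
    push_cast
    rfl
  let P (j : ℕ) := qPochhammerInf (-q * (q ^ 2) ^ j) ((q ^ 2) ^ (2 * k + 1))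
  have prod_P : ∏ j ∈ Finset.range (2 * k + 1), P j = qPochhammerInf (-q) (q ^ 2) :=
    (qPochhammerInf_eq_prod_range (norm_pow_lt_one (norm_nome_lt_one ht) two_ne_zero) _
      (2 * k).succ_ne_zero).symm
  have factor (j : ℕ) (hj : j ∈ Finset.range (2 * k + 1)) :
      evenKernel (((j : ℝ) - k) / (2 * k + 1) : ℝ) ((2 * k + 1) * t) =
        nome (((j : ℝ) - k) ^ 2 * (t / (2 * k + 1))) * (E * (P j * P (2 * k + 1 - 1 - j))) := by
    have hj' : j ≤ 2 * k := Nat.lt_succ_iff.1 (Finset.mem_range.1 hj)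
    rw [evenKernel_div_eq_qPochhammerInf _ (by positivity) ht, nome_mul, Nat.add_sub_cancel,
      show (2 * k + 1 + 2 * ((j : ℝ) - k)) = 2 * j + 1 by ring,
      show (2 * k + 1 - 2 * ((j : ℝ) - k)) = 2 * (2 * k - j : ℕ) + 1 by push_cast [hj']; ring,
      neg_nome_odd_mul, neg_nome_odd_mul]
  have exponent : nome ((∑ j ∈ Finset.range (2 * k + 1), ((j : ℝ) - k) ^ 2) * (t / (2 * k + 1))) *
      nome (t / 12) = nome ((2 * k + 1) * t / 12) ^ (2 * k + 1) := by
    rw [sum_range_sub_sq, ← nome_add, nome_pow]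
    push_cast
    congr 1
    field_simp
    ring
  rw [Finset.prod_congr rfl factor, Finset.prod_mul_distrib, Finset.prod_mul_distrib,
    Finset.prod_mul_distrib, Finset.prod_range_reflect, prod_P, Finset.prod_const,
    Finset.card_range, ← nome_sum, ← Finset.sum_mul, evenKernel_zero_eq_qPochhammerInf ht,
    etaImaginaryAxis, etaImaginaryAxis, nome_mul, mul_pow, ← exponent]
  ring

end ThetaProducts

section Lattice

open HurwitzZeta Real

variable {t : ℝ}

lemma evenKernel_intCast_add (k : ℤ) (s t : ℝ) :
    evenKernel (k + s : ℝ) t = evenKernel s t := by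
  rw [show ((k + s : ℝ) : UnitAddCircle) = s from
    QuotientAddGroup.eq_iff_sub_mem.2 ⟨k, by simp⟩]

lemma evenKernel_intCast_sub (k : ℤ) (s t : ℝ) :
    evenKernel (k - s : ℝ) t = evenKernel s t := by
  rw [sub_eq_add_neg, evenKernel_intCast_add, AddCircle.coe_neg, evenKernel_neg]

lemma evenKernel_eq_sum_range (s : ℝ) (N : ℕ) [NeZero N] (ht : 0 < t) :
    evenKernel s t = ∑ r ∈ Finset.range N, evenKernel ((s + r) / N : ℝ) (N ^ 2 * t) := by
  have hN : (N : ℝ) ≠ 0 := Nat.cast_ne_zero.2 (NeZero.ne N)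
  let e : Fin N × ℤ ≃ ℤ := (Equiv.prodComm _ _).trans (Int.divModEquiv N).symm
  rw [Finset.sum_range]
  refine ((e.hasSum_iff.2 (hasSum_nome_evenKernel s ht)).prod_fiberwise fun r ↦ ?_).unique
    (hasSum_fintype _)
  refine (hasSum_nome_evenKernel _ (by positivity)).congr_fun fun m ↦ ?_
  simp only [e, Function.comp_apply, Equiv.trans_apply, Equiv.prodComm_apply, Prod.swap_prod_mk,
    Int.divModEquiv_symm_apply]
  push_cast
  field_simp
  ring_nf

/-- The partition of the Gaussian integers `x + iy` into the `a² + 1` cosets of the ideal `(a + i)`,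
in the coordinates `x + iy = r + (a + i) (u - iv)`. -/
def gaussianCosetEquiv (a : ℕ) : Fin (a ^ 2 + 1) × ℤ × ℤ ≃ ℤ × ℤ where
  toFun p := (a * p.2.1 + p.2.2 + p.1, p.2.1 - a * p.2.2)
  invFun p :=
    let w := Int.divModEquiv (a ^ 2 + 1) (p.1 - a * p.2)
    (w.2, p.2 + a * w.1, w.1)
  left_inv := fun ⟨r, u, v⟩ ↦ by
    have h : (a * u + v + r : ℤ) - a * (u - a * v) = (Int.divModEquiv (a ^ 2 + 1)).symm (v, r) := by
      simp only [Int.divModEquiv_symm_apply]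
      push_cast
      ring
    simp only [h, Equiv.apply_symm_apply, sub_add_cancel]
  right_inv := fun ⟨x, y⟩ ↦ by
    have h := (Int.divModEquiv (a ^ 2 + 1)).symm_apply_apply (x - a * y)
    simp only [Int.divModEquiv_symm_apply] at h
    push_cast at h
    ext
    · simp only
      linear_combination h
    · simp only
      ring

lemma hasSum_nome_evenKernel_mul (s s' : ℝ) (ht : 0 < t) :
    HasSum (fun p : ℤ × ℤ ↦ nome (((p.1 + s) ^ 2 + (p.2 + s') ^ 2) * t))
      (evenKernel s t * evenKernel s' t) := by
  simp only [add_mul, nome_add]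
  have h := hasSum_nome_evenKernel s ht
  have h' := hasSum_nome_evenKernel s' ht
  exact h.mul h' (h.summable.mul_of_nonneg h'.summable (fun _ ↦ (nome_pos _).le)
    fun _ ↦ (nome_pos _).le)

lemma evenKernel_mul_evenKernel_eq_sum_range (a : ℕ) (s s' : ℝ) (ht : 0 < t) :
    evenKernel s t * evenKernel s' t = ∑ r ∈ Finset.range (a ^ 2 + 1),
      evenKernel ((a * (s + r) + s') / (a ^ 2 + 1) : ℝ) ((a ^ 2 + 1) * t) *
        evenKernel ((s + r - a * s') / (a ^ 2 + 1) : ℝ) ((a ^ 2 + 1) * t) := by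
  rw [Finset.sum_range]
  refine (((gaussianCosetEquiv a).hasSum_iff.2
    (hasSum_nome_evenKernel_mul s s' ht)).prod_fiberwise fun r ↦ ?_).unique (hasSum_fintype _)
  refine (hasSum_nome_evenKernel_mul _ _ (by positivity)).congr_fun fun ⟨u, v⟩ ↦ ?_
  have hN : (a : ℝ) ^ 2 + 1 ≠ 0 := by positivity
  simp only [gaussianCosetEquiv, Function.comp_apply, Equiv.coe_fn_mk]
  congr 1
  push_cast
  field_simp
  ring

end Lattice

section SpecialValues

open HurwitzZeta Real

variable {t : ℝ}

lemma evenKernel_zero_sq_eq_two_mul (ht : 0 < t) :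
    evenKernel 0 t ^ 2 = evenKernel 0 (2 * t) ^ 2 + evenKernel (1 / 2 : ℝ) (2 * t) ^ 2 := by
  have h := evenKernel_mul_evenKernel_eq_sum_range 1 0 0 ht
  norm_num [Finset.sum_range_succ] at h
  norm_num [sq, h]

lemma evenKernel_half_sq_eq_two_mul (ht : 0 < t) :
    evenKernel (1 / 2 : ℝ) t ^ 2 = 2 * (evenKernel 0 (2 * t) * evenKernel (1 / 2 : ℝ) (2 * t)) := by
  have h := evenKernel_mul_evenKernel_eq_sum_range 1 (1 / 2) (1 / 2) ht
  have h_one : evenKernel (1 : ℝ) (2 * t) = evenKernel 0 (2 * t) := by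
    simpa using evenKernel_intCast_add 1 0 (2 * t)
  norm_num [Finset.sum_range_succ] at h
  rw [sq, h, h_one]
  ring

lemma evenKernel_zero_sq_eq_five_mul (ht : 0 < t) :
    evenKernel 0 t ^ 2 = evenKernel 0 (5 * t) ^ 2 +
      4 * (evenKernel (1 / 5 : ℝ) (5 * t) * evenKernel (2 / 5 : ℝ) (5 * t)) := by
  have h := evenKernel_mul_evenKernel_eq_sum_range 2 0 0 ht
  have h3 := evenKernel_intCast_sub 1 (2 / 5) (5 * t)
  have h4 := evenKernel_intCast_sub 1 (1 / 5) (5 * t)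
  have h6 := evenKernel_intCast_add 1 (1 / 5) (5 * t)
  have h8 := evenKernel_intCast_sub 2 (2 / 5) (5 * t)
  norm_num [Finset.sum_range_succ] at h h3 h4 h6 h8
  rw [sq, h, h3, h4, h6, h8]
  ring

lemma two_mul_evenKernel_fifths_five :
    2 * (evenKernel (1 / 5 : ℝ) 5 + evenKernel (2 / 5 : ℝ) 5) = (√5 - 1) * evenKernel 0 5 := by
  have h := evenKernel_eq_sum_range 0 5 (t := 1 / 5) (by norm_num)
  have h3 := evenKernel_intCast_sub 1 (2 / 5) 5
  have h4 := evenKernel_intCast_sub 1 (1 / 5) 5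
  norm_num [Finset.sum_range_succ] at h h3 h4
  have h_inv := evenKernel_zero_one_div 5
  linear_combination h_inv - h - h3 - h4

lemma evenKernel_zero_one_sq_eq_sqrt_two_mul :
    evenKernel 0 1 ^ 2 = √2 * evenKernel (1 / 2 : ℝ) 1 ^ 2 := by
  have h_half : evenKernel (1 / 2 : ℝ) 2 = (√2 - 1) * evenKernel 0 2 := by
    have h := evenKernel_eq_sum_range 0 2 (t := 1 / 2) (by norm_num)
    norm_num [Finset.sum_range_succ] at h
    linear_combination evenKernel_zero_one_div 2 - h
  have h_zero_sq := evenKernel_zero_sq_eq_two_mul one_pos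
  have h_half_sq := evenKernel_half_sq_eq_two_mul one_pos
  rw [mul_one, h_half] at h_zero_sq h_half_sq
  rw [h_zero_sq, h_half_sq]
  linear_combination -evenKernel 0 2 ^ 2 * sq_sqrt (zero_le_two (α := ℝ))

lemma two_pow_twelve_mul_etaImaginaryAxis_one :
    2 ^ 12 * etaImaginaryAxis 1 ^ 24 = evenKernel 0 1 ^ 24 := by
  have h_cos : cosKernel (1 / 2 : ℝ) 1 = evenKernel (1 / 2 : ℝ) 1 := by
    simpa using cosKernel_one_div (1 / 2 : ℝ) one_pos
  have h_eta := two_mul_etaImaginaryAxis_pow_three one_pos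
  rw [h_cos] at h_eta
  have h_cube : 2 * √2 * etaImaginaryAxis 1 ^ 3 = evenKernel 0 1 ^ 3 := by
    linear_combination √2 * h_eta - evenKernel 0 1 * evenKernel_zero_one_sq_eq_sqrt_two_mul
  calc 2 ^ 12 * etaImaginaryAxis 1 ^ 24
    _ = (2 * √2 * etaImaginaryAxis 1 ^ 3) ^ 8 := by
      rw [mul_pow, mul_pow, show √2 ^ 8 = (√2 ^ 2) ^ 4 by ring, sq_sqrt zero_le_two]
      ring
    _ = evenKernel 0 1 ^ 24 := by rw [h_cube, ← pow_mul]

lemma evenKernel_fifths_sq_mul_etaImaginaryAxis (ht : 0 < t) :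
    (evenKernel (1 / 5 : ℝ) (5 * t) * evenKernel (2 / 5 : ℝ) (5 * t)) ^ 2 * evenKernel 0 (5 * t) *
      etaImaginaryAxis t = etaImaginaryAxis (5 * t) ^ 5 * evenKernel 0 t := by
  have h := prod_evenKernel_mul_etaImaginaryAxis 2 ht
  have h1 := evenKernel_intCast_sub 0 (1 / 5) (5 * t)
  have h2 := evenKernel_intCast_sub 0 (2 / 5) (5 * t)
  norm_num [Finset.prod_range_succ, neg_div] at h h1 h2 ⊢
  rw [← h]
  ring

lemma two_pow_six_mul_evenKernel_fifths :
    2 ^ 6 * (evenKernel (1 / 5 : ℝ) 5 * evenKernel (2 / 5 : ℝ) 5) *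
        (evenKernel (1 / 5 : ℝ) 1 * evenKernel (2 / 5 : ℝ) 1) ^ 5 =
      evenKernel 0 1 ^ 10 * evenKernel 0 5 ^ 2 := by
  have h_one := evenKernel_fifths_sq_mul_etaImaginaryAxis one_pos
  have h_fifth := evenKernel_fifths_sq_mul_etaImaginaryAxis (t := 1 / 5) (by norm_num)
  rw [evenKernel_zero_one_div, etaImaginaryAxis_one_div (by norm_num)] at h_fifth
  rw [mul_one] at h_one
  rw [mul_one_div_cancel (by norm_num)] at h_fifth
  have h_eta := two_pow_twelve_mul_etaImaginaryAxis_one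
  have h_eta_pos : 0 < etaImaginaryAxis 1 := etaImaginaryAxis_pos one_pos
  have h_theta_pos (a : UnitAddCircle) : 0 < evenKernel a 1 := evenKernel_pos a one_pos
  have h_theta_pos' (a : UnitAddCircle) : 0 < evenKernel a 5 := evenKernel_pos a (by norm_num)
  have hx := h_theta_pos 0
  have hA := h_theta_pos' 0
  have hF := mul_pos (h_theta_pos' (1 / 5 : ℝ)) (h_theta_pos' (2 / 5 : ℝ))
  have hH := mul_pos (h_theta_pos (1 / 5 : ℝ)) (h_theta_pos (2 / 5 : ℝ))
  set x := evenKernel 0 1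
  set A := evenKernel 0 5
  set F := evenKernel (1 / 5 : ℝ) 5 * evenKernel (2 / 5 : ℝ) 5
  set H := evenKernel (1 / 5 : ℝ) 1 * evenKernel (2 / 5 : ℝ) 1
  set e := etaImaginaryAxis 1
  have h_fifth' : H ^ 2 * x * etaImaginaryAxis 5 = e ^ 5 * A :=
    mul_left_cancel₀ (sqrt_ne_zero'.2 (by norm_num : (0 : ℝ) < 5)) (by linear_combination h_fifth)
  have h_elim : F ^ 2 * H ^ 10 * x ^ 4 = e ^ 24 * A ^ 4 := by
    refine mul_left_cancel₀ (by positivity : x * A * e ≠ 0) ?_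
    calc x * A * e * (F ^ 2 * H ^ 10 * x ^ 4)
      _ = (F ^ 2 * A * e) * (H ^ 10 * x ^ 5) := by ring
      _ = x * (H ^ 2 * x * etaImaginaryAxis 5) ^ 5 := by rw [h_one]; ring
      _ = x * A * e * (e ^ 24 * A ^ 4) := by rw [h_fifth']; ring
  refine (pow_left_inj₀ (by positivity) (by positivity) two_ne_zero).1 ?_
  refine mul_left_cancel₀ (by positivity : x ^ 4 ≠ 0) ?_
  linear_combination 2 ^ 12 * h_elim + A ^ 4 * h_eta

lemma eq_of_quintic_modular_equation {m : ℝ} (hm : 1 < m)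
    (h : (5 - m) ^ 5 * (m - 1) = 64 * m ^ 5) : m = 5 * √5 - 10 := by
  have h_factor : (m ^ 2 + 20 * m - 25) ^ 2 * (m ^ 2 - 2 * m + 5) = 0 := by
    linear_combination -h
  have h_ne : m ^ 2 - 2 * m + 5 ≠ 0 := by nlinarith only [sq_nonneg (m - 1)]
  have h_quad : m ^ 2 + 20 * m - 25 = 0 := by simpa [h_ne] using h_factor
  have h_sq : (m + 10) ^ 2 = (5 * √5) ^ 2 := by
    rw [mul_pow, sq_sqrt (by norm_num)]
    linear_combination h_quad
  exact eq_sub_of_add_eq ((pow_left_inj₀ (by linarith) (by positivity) two_ne_zero).1 h_sq)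

lemma evenKernel_zero_one_sq : evenKernel 0 1 ^ 2 = (5 * √5 - 10) * evenKernel 0 5 ^ 2 := by
  have h_one := evenKernel_zero_sq_eq_five_mul one_pos
  have h_fifth := evenKernel_zero_sq_eq_five_mul (t := 1 / 5) (by norm_num)
  rw [evenKernel_zero_one_div, mul_one_div_cancel (by norm_num), mul_pow,
    sq_sqrt (by norm_num)] at h_fifth
  rw [mul_one] at h_one
  have h_prod := two_pow_six_mul_evenKernel_fifths
  have hA : 0 < evenKernel 0 5 := evenKernel_pos 0 (by norm_num)
  have hF := mul_pos (evenKernel_pos (1 / 5 : ℝ) (t := 5) (by norm_num))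
    (evenKernel_pos (2 / 5 : ℝ) (t := 5) (by norm_num))
  set x := evenKernel 0 1
  set A := evenKernel 0 5
  set F := evenKernel (1 / 5 : ℝ) 5 * evenKernel (2 / 5 : ℝ) 5
  set H := evenKernel (1 / 5 : ℝ) 1 * evenKernel (2 / 5 : ℝ) 1
  rw [show F = (x ^ 2 - A ^ 2) / 4 by linarith, show H = (5 * A ^ 2 - x ^ 2) / 4 by linarith]
    at h_prod
  rw [← div_eq_iff (by positivity)]
  apply eq_of_quintic_modular_equation
  · rw [one_lt_div (by positivity)]
    linarith
  · field_simp
    linear_combination 64 * h_prod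

lemma mul_evenKernel_fifths_five :
    (11 + 5 * √5) * (evenKernel (1 / 5 : ℝ) 5 * evenKernel (2 / 5 : ℝ) 5) =
      evenKernel 0 5 ^ 2 := by
  have h_quint := evenKernel_zero_sq_eq_five_mul one_pos
  rw [evenKernel_zero_one_sq, mul_one] at h_quint
  have h_sqrt : √5 ^ 2 = 5 := sq_sqrt (by norm_num)
  linear_combination -(11 + 5 * √5) / 4 * h_quint + 25 / 4 * evenKernel 0 5 ^ 2 * h_sqrt

lemma cos_two_pi_mul_one_fifth : cos (2 * π * (1 / 5)) = (√5 - 1) / 4 := by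
  rw [show 2 * π * (1 / 5) = 2 * (π / 5) by ring, cos_two_mul, cos_pi_div_five]
  linear_combination sq_sqrt (by norm_num : (0 : ℝ) ≤ 5) / 8

lemma cos_two_pi_mul_two_fifths : cos (2 * π * (2 / 5)) = -(√5 + 1) / 4 := by
  rw [show 2 * π * (2 / 5) = π - π / 5 by ring, cos_pi_sub, cos_pi_div_five]
  ring

lemma evenKernel_two_fifths_div_evenKernel_one_fifth_five :
    evenKernel (2 / 5 : ℝ) 5 / evenKernel (1 / 5 : ℝ) 5 = √5 + 1 - √(5 + 2 * √5) := by
  have hB : 0 < evenKernel (1 / 5 : ℝ) 5 := evenKernel_pos _ (by norm_num)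
  have h_le : evenKernel (2 / 5 : ℝ) 5 ≤ evenKernel (1 / 5 : ℝ) 5 := by
    refine evenKernel_le_evenKernel ?_ (by norm_num)
    rw [cos_two_pi_mul_one_fifth, cos_two_pi_mul_two_fifths]
    linarith [sqrt_nonneg 5]
  have h_sum := two_mul_evenKernel_fifths_five
  have h_prod := mul_evenKernel_fifths_five
  have h_sqrt : √5 ^ 2 = 5 := sq_sqrt (by norm_num)
  set A := evenKernel 0 5
  set B := evenKernel (1 / 5 : ℝ) 5
  set C := evenKernel (2 / 5 : ℝ) 5
  have h_quad : C ^ 2 - (2 + 2 * √5) * (B * C) + B ^ 2 = 0 := by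
    have h_sum_sq : 4 * (B + C) ^ 2 = (√5 - 1) ^ 2 * A ^ 2 := by
      rw [← mul_pow, ← h_sum]
      ring
    rw [← h_prod] at h_sum_sq
    linear_combination h_sum_sq / 4 + (B * C) * (5 * √5 + 1) / 4 * h_sqrt
  suffices √(5 + 2 * √5) = √5 + 1 - C / B by rw [this, sub_sub_cancel]
  have h_ratio : C / B ≤ 1 := (div_le_one hB).2 h_le
  rw [sqrt_eq_iff_mul_self_eq (by positivity) (by linarith [sqrt_nonneg 5])]
  field_simp
  linear_combination -h_quad - B ^ 2 * h_sqrt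

end SpecialValues

section PartialFractions

open Complex

variable {z : ℂ}

lemma cot_sub_cot_two_mul (hz : sin (2 * z) ≠ 0) : cot z - cot (2 * z) = 1 / sin (2 * z) := by
  rw [cot_eq_cos_div_sin, cot_eq_cos_div_sin, cos_two_mul, sin_two_mul] at *
  have h_cos : cos z ≠ 0 := right_ne_zero_of_mul hz
  have h_sin : sin z ≠ 0 := right_ne_zero_of_mul (left_ne_zero_of_mul hz)
  field_simp
  ring

lemma half_mem_integerComplement (hz : z ∈ integerComplement) : z / 2 ∈ integerComplement := by
  rintro ⟨n, hn⟩
  exact hz ⟨2 * n, by push_cast; rw [hn]; ring⟩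

lemma hasSum_one_div_sq_sub_sq (hz : z ∈ integerComplement) :
    HasSum (fun n : ℤ ↦ 1 / (z ^ 2 - n ^ 2)) (Real.pi * cot (Real.pi * z) / z) := by
  have hz0 : z ≠ 0 := integerComplement.ne_zero hz
  have h_cot := (summable_cotTerm hz).hasSum
  simp only [cotTerm] at h_cot
  rw [← cot_series_rep' hz] at h_cot
  have h_succ : HasSum (fun n : ℕ ↦ 1 / (z ^ 2 - (n + 1) ^ 2))
      ((Real.pi * cot (Real.pi * z) - 1 / z) / (2 * z)) := by
    refine (h_cot.div_const (2 * z)).congr_fun fun n ↦ ?_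
    have h_sub : z - (n + 1) ≠ 0 := by
      simpa [sub_eq_add_neg, add_comm] using integerComplement_add_ne_zero hz (-(n + 1))
    have h_add : z + (n + 1) ≠ 0 := by
      simpa using integerComplement_add_ne_zero hz (n + 1)
    rw [sq_sub_sq]
    field_simp
    ring
  have h_nat : HasSum (fun n : ℕ ↦ 1 / (z ^ 2 - ((n : ℤ) : ℂ) ^ 2))
      ((Real.pi * cot (Real.pi * z) - 1 / z) / (2 * z) + 1 / z ^ 2) := by
    rw [← hasSum_nat_add_iff' 1]
    simpa using h_succ
  convert! HasSum.of_nat_of_neg_add_one (f := fun n : ℤ ↦ 1 / (z ^ 2 - (n : ℂ) ^ 2)) h_nat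
    (h_succ.congr_fun fun n ↦ ?_) using 1
  · field_simp
    ring
  · push_cast
    rw [neg_sq]

lemma hasSum_neg_one_zpow_div_sq_sub_sq (hz : z ∈ integerComplement) :
    HasSum (fun n : ℤ ↦ (-1) ^ n / (z ^ 2 - n ^ 2)) (Real.pi / (z * sin (Real.pi * z))) := by
  have hz0 : z ≠ 0 := integerComplement.ne_zero hz
  have h_inj : Function.Injective fun m : ℤ ↦ 2 * m := mul_right_injective₀ two_ne_zero
  have h_even : HasSum (fun n : ℤ ↦ if Even n then 1 / (z ^ 2 - n ^ 2) else 0)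
      (1 / 4 * (Real.pi * cot (Real.pi * (z / 2)) / (z / 2))) := by
    rw [← h_inj.hasSum_iff fun n hn ↦ if_neg fun h ↦ hn ?_]
    · refine ((hasSum_one_div_sq_sub_sq (half_mem_integerComplement hz)).mul_left (1 / 4)).congr_fun
        fun n ↦ ?_
      simp only [Function.comp_apply, even_two_mul, if_true]
      rw [one_div_mul_one_div]
      push_cast
      ring_nf
    · obtain ⟨m, hm⟩ := h.two_dvd
      exact ⟨m, hm.symm⟩
  have h_cot : cot (Real.pi * (z / 2)) - cot (Real.pi * z) = 1 / sin (Real.pi * z) := by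
    have h_two : Real.pi * z = 2 * (Real.pi * (z / 2)) := by ring
    rw [h_two]
    exact cot_sub_cot_two_mul (h_two ▸ sin_pi_mul_ne_zero hz)
  convert! (h_even.mul_left 2).sub (hasSum_one_div_sq_sub_sq hz) using 1
  · funext n
    split_ifs with h
    · rw [h.neg_one_zpow]
      ring
    · rw [(Int.not_even_iff_odd.1 h).neg_one_zpow]
      ring
  · rw [← div_div, div_right_comm, div_eq_mul_one_div (Real.pi : ℂ), ← h_cot]
    field_simp
    ring

lemma hasSum_neg_one_zpow_div_sq_add_sq {b : ℝ} (hb : b ≠ 0) :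
    HasSum (fun n : ℤ ↦ (-1) ^ n / ((n : ℝ) ^ 2 + b ^ 2))
      (Real.pi / (b * Real.sinh (Real.pi * b))) := by
  have hz : b * I ∈ integerComplement := by
    rintro ⟨n, hn⟩
    simpa [hb] using (congrArg im hn).symm
  rw [← hasSum_ofReal]
  convert! (hasSum_neg_one_zpow_div_sq_sub_sq hz).neg using 1
  · funext n
    push_cast
    rw [mul_pow, I_sq, ← div_neg]
    ring_nf
  · rw [← mul_assoc, sin_mul_I, mul_mul_mul_comm, I_mul_I, mul_neg_one, div_neg, neg_neg]
    push_cast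
    rfl

end PartialFractions

section LogSeries

open HurwitzZeta Real

variable {t : ℝ}

/-- The Fourier coefficients of the even function `s ↦ 2 * log (cosKernel s t)`. The constant
coefficient is omitted: division by zero gives `logThetaCoeff t 0 = 0`. -/
noncomputable def logThetaCoeff (t : ℝ) (k : ℤ) : ℝ :=
  (-1) ^ (k + 1) / (k * sinh (π * k * t))

lemma logThetaCoeff_zero (t : ℝ) : logThetaCoeff t 0 = 0 := by
  simp [logThetaCoeff]

lemma even_logThetaCoeff (t : ℝ) : (logThetaCoeff t).Even := fun k ↦ by
  have h_pow : (-1 : ℝ) ^ (-k + 1) = (-1) ^ (k + 1) := by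
    rw [zpow_add₀ (by norm_num), zpow_add₀ (by norm_num), zpow_neg, ← inv_zpow, inv_neg_one]
  rw [logThetaCoeff, logThetaCoeff, h_pow]
  push_cast
  rw [mul_neg, neg_mul _ t, sinh_neg, neg_mul_neg]

lemma hasSum_log_one_add_two_mul_cos {x : ℝ} (hx : |x| < 1) (φ : ℝ) :
    HasSum (fun k : ℕ ↦ (-1) ^ (k + 1) * (2 * cos (k * φ)) / k * x ^ k)
      (log (1 + 2 * cos φ * x + x ^ 2)) := by
  set z : ℂ := x * Complex.exp (φ * Complex.I) with hz
  have h_norm : ‖z‖ < 1 := by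
    rwa [hz, norm_mul, Complex.norm_exp_ofReal_mul_I, mul_one, Complex.norm_real]
  have h_normSq : 1 + 2 * cos φ * x + x ^ 2 = ‖1 + z‖ ^ 2 := by
    rw [Complex.sq_norm, Complex.normSq_apply, Complex.add_re, Complex.add_im, Complex.one_re,
      Complex.one_im, hz, Complex.re_ofReal_mul, Complex.im_ofReal_mul,
      Complex.exp_ofReal_mul_I_re, Complex.exp_ofReal_mul_I_im]
    linear_combination -x ^ 2 * sin_sq_add_cos_sq φ
  have h := (Complex.hasSum_re (Complex.hasSum_taylorSeries_log h_norm)).mul_left 2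
  rw [h_normSq, log_pow, ← Complex.log_re]
  refine h.congr_fun fun k ↦ ?_
  have h_term : (-1 : ℂ) ^ (k + 1) * z ^ k / k =
      (((-1) ^ (k + 1) * x ^ k / k : ℝ) : ℂ) * Complex.exp ((k * φ : ℝ) * Complex.I) := by
    rw [hz, mul_pow, ← Complex.exp_nat_mul]
    push_cast
    rw [mul_assoc (k : ℂ)]
    ring
  rw [h_term, Complex.re_ofReal_mul, Complex.exp_ofReal_mul_I_re]
  ring

lemma hasSum_nome_odd_pow (ht : 0 < t) {k : ℕ} (hk : k ≠ 0) :
    HasSum (fun j : ℕ ↦ (nome t ^ (2 * j + 1)) ^ k) (1 / (2 * sinh (π * k * t))) := by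
  have h := (hasSum_geometric_of_lt_one (pow_nonneg (nome_pos t).le (2 * k))
    (pow_lt_one₀ (nome_pos t).le (nome_lt_one ht) (by positivity))).mul_left (nome t ^ k)
  have h_exp : exp (-(π * k * t)) = nome t ^ k := by
    rw [nome_pow, nome]
    ring_nf
  have h_sinh : 2 * sinh (π * k * t) = (nome t ^ k)⁻¹ - nome t ^ k := by
    rw [sinh_eq, h_exp, ← h_exp, exp_neg, inv_inv]
    ring
  have h_pos : 0 < nome t ^ k := pow_pos (nome_pos t) k
  convert! h using 1
  · funext j
    ring
  · rw [h_sinh, mul_comm 2 k, pow_mul]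
    field_simp

lemma summable_log_cosKernel_terms (φ : ℝ) (ht : 0 < t) :
    Summable fun p : ℕ × ℕ ↦
      (-1) ^ (p.1 + 1) * (2 * cos (p.1 * φ)) / p.1 * (nome t ^ (2 * p.2 + 1)) ^ p.1 := by
  have h_geom := summable_geometric_of_lt_one (nome_pos t).le (nome_lt_one ht)
  have h_nonneg (k : ℕ) : 0 ≤ nome t ^ k := pow_nonneg (nome_pos t).le k
  refine .of_norm_bounded ((h_geom.mul_of_nonneg h_geom h_nonneg h_nonneg).mul_left 2) ?_
  rintro ⟨k, j⟩
  obtain rfl | hk := Nat.eq_zero_or_pos k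
  · simpa using h_nonneg j
  have h_coeff : ‖(-1) ^ (k + 1) * (2 * cos (k * φ)) / k‖ ≤ 2 := by
    have hk' : (1 : ℝ) ≤ k := by exact_mod_cast hk
    simp only [norm_div, norm_mul, norm_pow, norm_neg, norm_one, one_pow, one_mul, norm_eq_abs,
      abs_two, Nat.abs_cast]
    rw [div_le_iff₀ (by positivity)]
    nlinarith only [abs_cos_le_one (k * φ), hk']
  rw [norm_mul, norm_of_nonneg (pow_nonneg (h_nonneg _) k), ← pow_mul, ← pow_add]
  refine mul_le_mul h_coeff (pow_le_pow_of_le_one (nome_pos t).le (nome_lt_one ht).le ?_)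
    (h_nonneg _) zero_le_two
  nlinarith only [hk, Nat.zero_le (j * (k - 1)), Nat.sub_add_cancel hk]

lemma hasSum_log_cosKernel (s : ℝ) (ht : 0 < t) :
    HasSum (fun k : ℕ ↦ logThetaCoeff t k * cos (2 * π * (k * s)))
      (log (cosKernel s t / qPochhammerInf (nome t ^ 2) (nome t ^ 2))) := by
  have h_sum := (summable_log_cosKernel_terms (2 * π * s) ht).hasSum
  have h_lt (j : ℕ) : nome t ^ (2 * j + 1) < 1 :=
    pow_lt_one₀ (nome_pos t).le (nome_lt_one ht) (by positivity)
  have h_pos (j : ℕ) : 0 < nome t ^ (2 * j + 1) := pow_pos (nome_pos t) _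
  have h_log := ((Equiv.prodComm ℕ ℕ).hasSum_iff.2 h_sum).prod_fiberwise fun j ↦
    hasSum_log_one_add_two_mul_cos (abs_lt.2 ⟨by linarith [h_pos j], h_lt j⟩) (2 * π * s)
  have h_factor_pos (j : ℕ) :
      0 < 1 + 2 * cos (2 * π * s) * nome t ^ (2 * j + 1) + (nome t ^ (2 * j + 1)) ^ 2 := by
    nlinarith only [mul_nonneg (neg_le_iff_add_nonneg.1 (neg_one_le_cos (2 * π * s))) (h_pos j).le,
      pow_pos (sub_pos.2 (h_lt j)) 2]
  rw [(hasProd_cosKernel s ht).unique (hasProd_of_hasSum_log h_factor_pos h_log), log_exp]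
  refine h_sum.prod_fiberwise fun k ↦ ?_
  obtain rfl | hk := eq_or_ne k 0
  · simp [logThetaCoeff_zero]
  convert! (hasSum_nome_odd_pow ht hk).mul_left
    ((-1) ^ (k + 1) * (2 * cos (k * (2 * π * s))) / k) using 1
  rw [logThetaCoeff, ← Nat.cast_succ, zpow_natCast, Int.cast_natCast]
  field_simp

lemma hasSum_logThetaCoeff_mul_cos (s : ℝ) (ht : 0 < t) :
    HasSum (fun k : ℤ ↦ logThetaCoeff t k * cos (2 * π * (k * s)))
      (2 * log (cosKernel s t / qPochhammerInf (nome t ^ 2) (nome t ^ 2))) := by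
  have h := hasSum_log_cosKernel s ht
  convert! HasSum.of_nat_of_neg (f := fun k : ℤ ↦ logThetaCoeff t k * cos (2 * π * (k * s))) h
    (h.congr_fun fun k ↦ ?_) using 1
  · simp only [logThetaCoeff_zero]
    ring
  · simp [even_logThetaCoeff t k]

end LogSeries

section ResidueClasses

open Real

lemma sum_range_cos_two_pi_mul_div (N : ℕ) [NeZero N] (m : ℤ) :
    ∑ r ∈ Finset.range N, cos (2 * π * (m * (r / N))) = if (N : ℤ) ∣ m then (N : ℝ) else 0 := by
  have hN : (N : ℂ) ≠ 0 := Nat.cast_ne_zero.2 (NeZero.ne N)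
  set ζ : ℂ := Complex.exp (2 * π * Complex.I * (m / N)) with hζ
  have h_re (r : ℕ) : cos (2 * π * (m * (r / N))) = (ζ ^ r).re := by
    rw [hζ, ← Complex.exp_nat_mul, ← Complex.exp_ofReal_mul_I_re]
    push_cast
    ring_nf
  have h_one : ζ = 1 ↔ (N : ℤ) ∣ m := by
    rw [hζ, Complex.exp_eq_one_iff]
    refine exists_congr fun n ↦ ?_
    rw [mul_comm, mul_left_inj' Complex.two_pi_I_ne_zero, div_eq_iff hN, mul_comm (n : ℂ)]
    norm_cast
  simp only [h_re, ← Complex.re_sum]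
  split_ifs with h_dvd
  · simp [h_one.2 h_dvd]
  · have h_pow : ζ ^ N = 1 := by
      rw [hζ, ← Complex.exp_nat_mul, Complex.exp_eq_one_iff]
      exact ⟨m, by field_simp⟩
    rw [geom_sum_eq (mt h_one.1 h_dvd), h_pow, sub_self, zero_div, Complex.zero_re]

variable {g : ℤ → ℝ}

lemma hasSum_even_mul_sin (hg : g.Even) (hg_sum : Summable g) (x : ℝ) :
    HasSum (fun k : ℤ ↦ g k * sin (2 * π * (k * x))) 0 := by
  have h_summable : Summable fun k : ℤ ↦ g k * sin (2 * π * (k * x)) := by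
    refine .of_norm_bounded hg_sum.norm fun k ↦ ?_
    rw [norm_mul]
    exact mul_le_of_le_one_right (norm_nonneg _) (abs_sin_le_one _)
  have h_neg := (Equiv.neg ℤ).hasSum_iff.2 h_summable.hasSum
  have h_odd : HasSum (fun k : ℤ ↦ -(g k * sin (2 * π * (k * x)))) _ :=
    h_neg.congr_fun fun k ↦ by simp [hg k]
  have h_zero := h_odd.unique h_summable.hasSum.neg
  rw [← self_eq_neg.1 h_zero]
  exact h_summable.hasSum

lemma hasSum_residue_class (hg : g.Even) (N : ℕ) [NeZero N] {G : ℕ → ℝ}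
    (hG : ∀ r : ℕ, HasSum (fun k : ℤ ↦ g k * cos (2 * π * (k * (r / N)))) (G r)) (a : ℤ) :
    HasSum (fun n : ℤ ↦ g (N * n + a))
      ((∑ r ∈ Finset.range N, cos (2 * π * (a * (r / N))) * G r) / N) := by
  have hN : (N : ℝ) ≠ 0 := Nat.cast_ne_zero.2 (NeZero.ne N)
  have hg_sum : Summable g := by simpa using (hG 0).summable
  have h_shift (r : ℕ) : HasSum (fun k : ℤ ↦ g k * cos (2 * π * (((k - a : ℤ) : ℝ) * (r / N))))
      (cos (2 * π * (a * (r / N))) * G r) := by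
    convert! ((hG r).mul_left (cos (2 * π * (a * (r / N))))).add
      ((hasSum_even_mul_sin hg hg_sum (r / N)).mul_left (sin (2 * π * (a * (r / N))))) using 1
    · funext k
      push_cast
      rw [sub_mul, mul_sub, cos_sub]
      ring
    · ring
  have h_sum := (hasSum_sum fun r (_ : r ∈ Finset.range N) ↦ h_shift r).div_const (N : ℝ)
  simp only [← Finset.mul_sum, sum_range_cos_two_pi_mul_div] at h_sum
  have h_inj : Function.Injective fun n : ℤ ↦ N * n + a := fun m n h ↦ by
    simpa [NeZero.ne N] using h
  rw [← h_inj.hasSum_iff] at h_sum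
  · refine h_sum.congr_fun fun n ↦ ?_
    simp [hN]
  · intro k hk
    rw [if_neg, mul_zero, zero_div]
    rintro ⟨n, hn⟩
    exact hk ⟨n, by simp [← hn]⟩

end ResidueClasses

section Evaluation

open HurwitzZeta Real

variable {t : ℝ}

lemma hasSum_neg_one_zpow_div_eq_logThetaCoeff {c : ℝ} (hc : c ≠ 0) {k : ℤ} (hk : k ≠ 0) :
    HasSum (fun m : ℤ ↦ (-1) ^ m / ((c * m) ^ 2 + (k : ℝ) ^ 2))
      ((-1) ^ (k + 1) * (π / c) * logThetaCoeff (1 / c) k) := by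
  have hk' : (k : ℝ) ≠ 0 := Int.cast_ne_zero.2 hk
  convert! (hasSum_neg_one_zpow_div_sq_add_sq (div_ne_zero hk' hc)).mul_left (1 / c ^ 2) using 1
  · funext m
    field_simp
  · have h_sign : (-1 : ℝ) ^ (k + 1) * (-1) ^ (k + 1) = 1 := by
      rw [← mul_zpow, neg_one_mul, neg_neg, one_zpow]
    rw [logThetaCoeff, mul_one_div, mul_div_assoc π]
    field_simp
    linear_combination h_sign

lemma tsum_neg_one_zpow_div_eq_logThetaCoeff (n : ℤ) :
    ∑' m : ℤ, (-1 : ℝ) ^ (m + n) / ((5 * (m : ℝ)) ^ 2 + (5 * (n : ℝ) + 1) ^ 2) =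
      π / 5 * logThetaCoeff (1 / 5) (5 * n + 1) := by
  have h := hasSum_neg_one_zpow_div_eq_logThetaCoeff (c := 5) (by norm_num)
    (k := 5 * n + 1) (by omega)
  have h_sign : (-1 : ℝ) ^ n * (-1) ^ (5 * n + 1 + 1) = 1 := by
    rw [← zpow_add₀ (by norm_num)]
    exact Even.neg_one_zpow ⟨3 * n + 1, by ring⟩
  convert! (h.mul_left ((-1 : ℝ) ^ n)).tsum_eq using 1
  · refine tsum_congr fun m ↦ ?_
    rw [zpow_add₀ (by norm_num)]
    push_cast
    ring
  · linear_combination -π / 5 * logThetaCoeff (1 / 5) (5 * n + 1) * h_sign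

lemma hasSum_logThetaCoeff_residue_class (N : ℕ) [NeZero N] {a : ℤ} (ha : ¬ (N : ℤ) ∣ a)
    (ht : 0 < t) :
    HasSum (fun n : ℤ ↦ logThetaCoeff t (N * n + a))
      (2 / N * ∑ r ∈ Finset.range N,
        cos (2 * π * (a * (r / N))) * log (evenKernel (r / N : ℝ) (1 / t))) := by
  have h := hasSum_residue_class (even_logThetaCoeff t) N
    (fun r ↦ hasSum_logThetaCoeff_mul_cos (r / N : ℝ) ht) a
  have h_sqrt : √t ≠ 0 := (sqrt_pos.2 ht).ne'
  have h_log (r : ℕ) : log (cosKernel (r / N : ℝ) t / qPochhammerInf (nome t ^ 2) (nome t ^ 2)) =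
      log (evenKernel (r / N : ℝ) (1 / t)) -
        log (√t * qPochhammerInf (nome t ^ 2) (nome t ^ 2)) := by
    have h_poch := (qPochhammerInf_nome_sq_pos ht).ne'
    rw [evenKernel_one_div, ← log_div (mul_ne_zero h_sqrt (cosKernel_pos _ ht).ne')
      (mul_ne_zero h_sqrt h_poch), mul_div_mul_left _ _ h_sqrt]
  have h_cos := sum_range_cos_two_pi_mul_div N a
  rw [if_neg ha] at h_cos
  convert! h using 1
  simp only [h_log, mul_sub, Finset.sum_sub_distrib, mul_left_comm _ (2 : ℝ), ← Finset.mul_sum,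
    ← Finset.sum_mul, h_cos]
  ring

lemma sum_range_five_cos_mul_log_evenKernel :
    ∑ r ∈ Finset.range 5, cos (2 * π * (r / 5)) * log (evenKernel (r / 5 : ℝ) 5) =
      log (evenKernel 0 5) + (√5 - 1) / 2 * log (evenKernel (1 / 5 : ℝ) 5) -
        (√5 + 1) / 2 * log (evenKernel (2 / 5 : ℝ) 5) := by
  have h_cos (x : ℝ) : cos (2 * π * (1 - x)) = cos (2 * π * x) := by
    rw [mul_one_sub, cos_two_pi_sub]
  have h_cos3 := h_cos (2 / 5)
  have h_cos4 := h_cos (1 / 5)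
  have h3 := evenKernel_intCast_sub 1 (2 / 5) 5
  have h4 := evenKernel_intCast_sub 1 (1 / 5) 5
  rw [cos_two_pi_mul_two_fifths] at h_cos3
  rw [cos_two_pi_mul_one_fifth] at h_cos4
  norm_num [Finset.sum_range_succ, cos_two_pi_mul_one_fifth, cos_two_pi_mul_two_fifths]
    at h_cos3 h_cos4 h3 h4 ⊢
  rw [h_cos3, h_cos4, h3, h4]
  ring

lemma log_evenKernel_fifths_five :
    log (evenKernel 0 5) + (√5 - 1) / 2 * log (evenKernel (1 / 5 : ℝ) 5) -
        (√5 + 1) / 2 * log (evenKernel (2 / 5 : ℝ) 5) =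
      (log (11 + 5 * √5) - √5 * log (√5 + 1 - √(5 + 2 * √5))) / 2 := by
  have hB : evenKernel (1 / 5 : ℝ) 5 ≠ 0 := (evenKernel_pos _ (by norm_num)).ne'
  have hC : evenKernel (2 / 5 : ℝ) 5 ≠ 0 := (evenKernel_pos _ (by norm_num)).ne'
  have h_prod := congrArg log mul_evenKernel_fifths_five
  rw [log_mul (by positivity) (mul_ne_zero hB hC), log_mul hB hC, log_pow] at h_prod
  rw [← evenKernel_two_fifths_div_evenKernel_one_fifth_five, log_div hC hB]
  push_cast at h_prod
  linear_combination -h_prod / 2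

lemma hasSum_logThetaCoeff_one_fifth :
    HasSum (fun n : ℤ ↦ logThetaCoeff (1 / 5) (5 * n + 1))
      ((log (11 + 5 * √5) - √5 * log (√5 + 1 - √(5 + 2 * √5))) / 5) := by
  have h := hasSum_logThetaCoeff_residue_class (t := 1 / 5) 5 (a := 1) (by decide) (by norm_num)
  push_cast at h
  simp only [one_mul, one_div_one_div, sum_range_five_cos_mul_log_evenKernel,
    log_evenKernel_fifths_five] at h
  convert! h using 1
  ring

end Evaluation

/-- `∑∑ (-1)^{m+n}/((5m)² + (5n+1)²)
  = -(π/(5√5)) log(√5 + 1 - √(5 + 2√5)) + (π/25) log(11 + 5√5)`. -/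
theorem lamb_formula :
    Tendsto (fun N : ℕ => ∑ n ∈ Finset.Ioo (-(N : ℤ)) (N : ℤ),
        ∑' m : ℤ, (-1 : ℝ) ^ (m + n) / ((5 * (m : ℝ)) ^ 2 + (5 * (n : ℝ) + 1) ^ 2))
      atTop
      (nhds (-(Real.pi / (5 * Real.sqrt 5)) *
          Real.log (Real.sqrt 5 + 1 - Real.sqrt (5 + 2 * Real.sqrt 5))
        + Real.pi / 25 * Real.log (11 + 5 * Real.sqrt 5))) := by
  simp only [tsum_neg_one_zpow_div_eq_logThetaCoeff]
  have h_const : Real.pi / (5 * Real.sqrt 5) = Real.pi / 25 * Real.sqrt 5 := by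
    field_simp
    rw [Real.sq_sqrt (by norm_num)]
    norm_num
  have h_sum := hasSum_logThetaCoeff_one_fifth.mul_left (Real.pi / 5)
  convert! h_sum.comp Finset.tendsto_Ioo_neg using 2
  rw [h_const]
  ring
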